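/- For α ∈ (0,1) there is a constant c(α) such that for every n ≥ 2, ∫_{G_m²} |∑_{i=1}^{n} A_{n−i}^{−α−1} D_i(u) D_i(v)| dμ(u,v) ≤ c(α) log n. -/

import Mathlib

open MeasureTheory Finset
open scoped ENNReal NNReal

noncomputable section

/-- Discrete measurable structure on each finite cyclic factor. -/
instance (n : ℕ) : MeasurableSpace (ZMod n) := ⊤

/-- The Vilenkin group determined by the generating sequence `m`. -/
abbrev Vil (m : ℕ → ℕ) : Type := ∀ k, ZMod (m k)

/-- Generalized numbers `M_k`. -/
def Mgen (m : ℕ → ℕ) : ℕ → ℕ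
  | 0 => 1
  | k + 1 => m k * Mgen m k

/-- `j`-th digit of `n` in the generalized number system. -/
def vdigit (m : ℕ → ℕ) (n j : ℕ) : ℕ := (n / Mgen m j) % m j

/-- Vilenkin functions `ψ_n = ∏ r_k^{n_k}`. -/
def vpsi (m : ℕ → ℕ) (n : ℕ) (x : Vil m) : ℂ :=
  ∏ k ∈ Finset.range (n + 1),
    Complex.exp (2 * Real.pi * Complex.I * ((x k).val : ℂ) / (m k : ℂ)) ^ vdigit m n k

/-- Vilenkin–Dirichlet kernels `D_n = ∑_{k<n} ψ_k`. -/
def vD (m : ℕ → ℕ) (n : ℕ) (x : Vil m) : ℂ := ∑ k ∈ Finset.range n, vpsi m k x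

/-- Cesàro numbers `A_n^α = ∏_{j=1}^n (α+j) / n!` (so `A_0^α = 1`). -/
def ces (α : ℝ) (n : ℕ) : ℝ := (∏ j ∈ Finset.range n, (α + j + 1)) / n.factorial

/-- The normalized "absolute value" `|u| = ∑_j u_j / M_{j+1}` on a Vilenkin group. -/
def vabs (m : ℕ → ℕ) (u : Vil m) : ℝ := ∑' j, ((u j).val : ℝ) / Mgen m (j + 1)

/-- Standard subgroup `I_n = {y : y_0 = ⋯ = y_{n-1} = 0}`. -/
def In (m : ℕ → ℕ) (n : ℕ) : Set (Vil m) := {u | ∀ j < n, u j = 0}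

/-!
The kernel `D_{M_j}` is `M_j` times the indicator of `I_j`, a subgroup of index `M_j`, so it has
`L¹` norm one. If `k ≤ M_j`, then `a` and `a + k` both exceed some multiple of `M_j` by at most
`2 M_j`, and reaching them from there digit by digit adds unimodular multiples of the kernels
`D_{M_l}` with `l ≤ j`. Since the `m_l` are bounded, only `O(j)` of them are needed, whence
`‖D_{a+k} - D_a‖₁ = O(log k)` uniformly in `a`.

Now replace every `D_i ⊗ D_i` by `D_n ⊗ D_n`. The weights add up to `A_n^{-α} = O(n^{-α})`, which
absorbs `‖D_n ⊗ D_n‖₁ = O(log² n)`. The errors `D_i ⊗ D_i - D_n ⊗ D_n` have norm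
`O(log n · log (n - i))`, and `∑ |A_k^{-α-1}| log k` converges, so together they cost `O(log n)`.
-/

section WeightedSums

lemma eLpNorm_sum_smul_le_of_center {X E 𝕜 ι : Type*} [MeasurableSpace X] {μ : Measure X}
    [NormedAddCommGroup E] [NormedDivisionRing 𝕜] [Module 𝕜 E] [NormSMulClass 𝕜 E]
    {p : ℝ≥0∞} (hp : 1 ≤ p) {F : ι → X → E} (hF : ∀ i, AEStronglyMeasurable (F i) μ) {G : X → E}
    (hG : AEStronglyMeasurable G μ) (s : Finset ι) (w : ι → 𝕜) :
    eLpNorm (∑ i ∈ s, w i • F i) p μ ≤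
      ‖∑ i ∈ s, w i‖ₑ * eLpNorm G p μ + ∑ i ∈ s, ‖w i‖ₑ * eLpNorm (F i - G) p μ := by
  have h_split : ∑ i ∈ s, w i • F i = (∑ i ∈ s, w i) • G + ∑ i ∈ s, w i • (F i - G) := by
    simp only [smul_sub, sum_sub_distrib, sum_smul, add_sub_cancel]
  have h_dev (i : ι) : AEStronglyMeasurable (w i • (F i - G)) μ := ((hF i).sub hG).const_smul _
  calc eLpNorm (∑ i ∈ s, w i • F i) p μ
      ≤ eLpNorm ((∑ i ∈ s, w i) • G) p μ + eLpNorm (∑ i ∈ s, w i • (F i - G)) p μ := by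
        rw [h_split]
        exact eLpNorm_add_le (hG.const_smul _) (s.aestronglyMeasurable_sum fun i _ ↦ h_dev i) hp
    _ ≤ eLpNorm ((∑ i ∈ s, w i) • G) p μ + ∑ i ∈ s, eLpNorm (w i • (F i - G)) p μ := by
        gcongr
        exact eLpNorm_sum_le (fun i _ ↦ h_dev i) hp
    _ = _ := by simp only [eLpNorm_const_smul]

end WeightedSums

section TensorProduct

variable {X Y R : Type*}

/-- The tensor product `f ⊗ g` of two functions, `(f ⊗ g)(x, y) = f(x) g(y)`. -/
def tensor [Mul R] (f : X → R) (g : Y → R) (z : X × Y) : R := f z.1 * g z.2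

lemma tensor_self_sub_tensor_self [NonUnitalNonAssocRing R] (f g : X → R) :
    tensor f f - tensor g g = tensor (f - g) f + tensor g (f - g) := by
  ext z
  simp only [tensor, Pi.sub_apply, Pi.add_apply]
  rw [sub_mul, mul_sub, sub_add_sub_cancel]

variable [NormedRing R] [MeasurableSpace X] [MeasurableSpace Y] {μ : Measure X} {ν : Measure Y}

lemma aestronglyMeasurable_tensor {f : X → R} {g : Y → R}
    (hf : AEStronglyMeasurable f μ) (hg : AEStronglyMeasurable g ν) :
    AEStronglyMeasurable (tensor f g) (μ.prod ν) :=
  hf.comp_fst.mul hg.comp_snd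

variable [NormMulClass R]

lemma eLpNorm_one_tensor [SFinite ν] {f : X → R} {g : Y → R}
    (hf : AEStronglyMeasurable f μ) (hg : AEStronglyMeasurable g ν) :
    eLpNorm (tensor f g) 1 (μ.prod ν) = eLpNorm f 1 μ * eLpNorm g 1 ν := by
  simp only [eLpNorm_one_eq_lintegral_enorm, tensor, enorm_mul]
  exact lintegral_prod_mul hf.enorm hg.enorm

lemma eLpNorm_one_tensor_self_sub_le [SFinite μ] {f g : X → R}
    (hf : AEStronglyMeasurable f μ) (hg : AEStronglyMeasurable g μ) :
    eLpNorm (tensor f f - tensor g g) 1 (μ.prod μ) ≤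
      eLpNorm (f - g) 1 μ * (eLpNorm f 1 μ + eLpNorm g 1 μ) := by
  rw [tensor_self_sub_tensor_self, mul_add, mul_comm _ (eLpNorm g 1 μ),
    ← eLpNorm_one_tensor (hf.sub hg) hf, ← eLpNorm_one_tensor hg (hf.sub hg)]
  exact eLpNorm_add_le (aestronglyMeasurable_tensor (hf.sub hg) hf)
    (aestronglyMeasurable_tensor hg (hf.sub hg)) le_rfl

lemma eLpNorm_one_sum_smul_tensor_self_le {𝕜 : Type*} [NormedDivisionRing 𝕜] [Module 𝕜 R]
    [NormSMulClass 𝕜 R] [SFinite μ] {f : ℕ → X → R}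
    (hf : ∀ i, AEStronglyMeasurable (f i) μ) (hf_zero : f 0 = 0) {B : ℕ → ℝ≥0∞} (hB : Monotone B)
    (h_incr : ∀ a k, eLpNorm (f (a + k) - f a) 1 μ ≤ B k) (w : ℕ → 𝕜) (n : ℕ) :
    eLpNorm (∑ i ∈ range (n + 1), w (n - i) • tensor (f i) (f i)) 1 (μ.prod μ) ≤
      ‖∑ k ∈ range (n + 1), w k‖ₑ * B n ^ 2 +
        2 * B n * ∑ k ∈ range (n + 1), ‖w k‖ₑ * B k := by
  have h_norm (i : ℕ) : eLpNorm (f i) 1 μ ≤ B i := by simpa [hf_zero] using h_incr 0 i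
  have h_tensor (i : ℕ) : AEStronglyMeasurable (tensor (f i) (f i)) (μ.prod μ) :=
    aestronglyMeasurable_tensor (hf i) (hf i)
  have h_dev (i : ℕ) (hi : i ∈ range (n + 1)) :
      eLpNorm (tensor (f i) (f i) - tensor (f n) (f n)) 1 (μ.prod μ) ≤ 2 * B n * B (n - i) := by
    have hin : i ≤ n := mem_range_succ_iff.1 hi
    have h_sub : eLpNorm (f n - f i) 1 μ ≤ B (n - i) := by
      simpa only [Nat.add_sub_cancel' hin] using h_incr i (n - i)
    rw [eLpNorm_sub_comm, mul_comm, two_mul]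
    exact (eLpNorm_one_tensor_self_sub_le (hf n) (hf i)).trans
      (mul_le_mul' h_sub (add_le_add (h_norm n) ((h_norm i).trans (hB hin))))
  calc eLpNorm (∑ i ∈ range (n + 1), w (n - i) • tensor (f i) (f i)) 1 (μ.prod μ)
      ≤ ‖∑ i ∈ range (n + 1), w (n - i)‖ₑ * eLpNorm (tensor (f n) (f n)) 1 (μ.prod μ) +
          ∑ i ∈ range (n + 1), ‖w (n - i)‖ₑ *
            eLpNorm (tensor (f i) (f i) - tensor (f n) (f n)) 1 (μ.prod μ) :=
        eLpNorm_sum_smul_le_of_center le_rfl h_tensor (h_tensor n) _ _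
    _ ≤ ‖∑ i ∈ range (n + 1), w (n - i)‖ₑ * B n ^ 2 +
          ∑ i ∈ range (n + 1), ‖w (n - i)‖ₑ * (2 * B n * B (n - i)) := by
        rw [eLpNorm_one_tensor (hf n) (hf n), sq]
        gcongr with i hi
        exacts [h_norm n, h_norm n, h_dev i hi]
    _ = _ := by
        rw [sum_flip w, sum_flip fun k ↦ ‖w k‖ₑ * (2 * B n * B k), mul_sum]
        simp only [mul_left_comm]

lemma eLpNorm_one_sum_smul_tensor_self_le_ofReal {𝕜 : Type*} [NormedDivisionRing 𝕜] [Module 𝕜 R]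
    [NormSMulClass 𝕜 R] [SFinite μ] {f : ℕ → X → R}
    (hf : ∀ i, AEStronglyMeasurable (f i) μ) (hf_zero : f 0 = 0) {B : ℕ → ℝ} (hB : Monotone B)
    (hB_nonneg : ∀ k, 0 ≤ B k)
    (h_incr : ∀ a k, eLpNorm (f (a + k) - f a) 1 μ ≤ ENNReal.ofReal (B k)) (w : ℕ → 𝕜) (n : ℕ) :
    eLpNorm (∑ i ∈ range (n + 1), w (n - i) • tensor (f i) (f i)) 1 (μ.prod μ) ≤
      ENNReal.ofReal (‖∑ k ∈ range (n + 1), w k‖ * B n ^ 2 +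
        2 * B n * ∑ k ∈ range (n + 1), ‖w k‖ * B k) := by
  have h_term (k : ℕ) : 0 ≤ ‖w k‖ * B k := mul_nonneg (norm_nonneg _) (hB_nonneg k)
  have h_sum : 0 ≤ ∑ k ∈ range (n + 1), ‖w k‖ * B k := sum_nonneg fun k _ ↦ h_term k
  have h_two : 0 ≤ 2 * B n := mul_nonneg zero_le_two (hB_nonneg n)
  rw [ENNReal.ofReal_add (by positivity) (by positivity), ENNReal.ofReal_mul (norm_nonneg _),
    ENNReal.ofReal_pow (hB_nonneg n), ENNReal.ofReal_mul h_two, ENNReal.ofReal_mul zero_le_two,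
    ENNReal.ofReal_ofNat, ENNReal.ofReal_sum_of_nonneg fun k _ ↦ h_term k]
  simp only [ENNReal.ofReal_mul (norm_nonneg _), ofReal_norm]
  exact eLpNorm_one_sum_smul_tensor_self_le hf hf_zero (ENNReal.ofReal_mono.comp hB) h_incr w n

end TensorProduct

section CesaroNumbers

lemma ces_zero (β : ℝ) : ces β 0 = 1 := by
  simp [ces]

lemma ces_succ (β : ℝ) (n : ℕ) : ces β (n + 1) = (1 + β / (n + 1)) * ces β n := by
  rw [ces, ces, prod_range_succ, Nat.factorial_succ]
  push_cast
  field_simp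
  ring

lemma ces_sub_one_succ (β : ℝ) (n : ℕ) : ces (β - 1) (n + 1) = β / (n + 1) * ces β n := by
  have h_shift : ∏ j ∈ range n, (β - 1 + (j + 1 : ℕ) + 1) = ∏ j ∈ range n, (β + j + 1) :=
    prod_congr rfl fun j _ ↦ by push_cast; ring
  rw [ces, ces, prod_range_succ', h_shift, Nat.factorial_succ]
  push_cast
  field_simp
  ring

lemma sum_ces_sub_one (β : ℝ) (n : ℕ) : ∑ k ∈ range (n + 1), ces (β - 1) k = ces β n := by
  induction n with
  | zero => simp [ces_zero]
  | succ n ih => rw [sum_range_succ, ih, ces_sub_one_succ, ces_succ]; ring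

lemma one_sub_mul_one_add_rpow_le_one {α t : ℝ} (hα : 0 ≤ α) (ht : 0 ≤ t) :
    (1 - α * t) * (1 + t) ^ α ≤ 1 := by
  have h_rpow : (1 + t) ^ α ≤ Real.exp (α * t) := by
    rw [mul_comm, Real.exp_mul]
    exact Real.rpow_le_rpow (by positivity) (add_comm t 1 ▸ Real.add_one_le_exp t) hα
  calc (1 - α * t) * (1 + t) ^ α ≤ Real.exp (-(α * t)) * Real.exp (α * t) := by
        gcongr
        exact Real.one_sub_le_exp_neg _
    _ = 1 := by rw [← Real.exp_add, neg_add_cancel, Real.exp_zero]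

lemma abs_ces_neg_succ_mul_rpow_le {α : ℝ} (hα : 0 ≤ α) {n : ℕ} (hn : α ≤ n + 1) :
    |ces (-α) (n + 1)| * (n + 1 + 1 : ℝ) ^ α ≤ |ces (-α) n| * (n + 1 : ℝ) ^ α := by
  have hn_pos : (0 : ℝ) < n + 1 := by positivity
  set t : ℝ := (n + 1 : ℝ)⁻¹ with ht
  have h_ratio : 1 + -α / (n + 1) = 1 - α * t := by rw [neg_div, div_eq_mul_inv]; ring
  have h_ratio_nonneg : 0 ≤ 1 - α * t := by
    rw [sub_nonneg, ht, ← div_eq_mul_inv]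
    exact (div_le_one hn_pos).2 hn
  have h_base : (n + 1 + 1 : ℝ) = (1 + t) * (n + 1) := by rw [ht]; field_simp
  calc |ces (-α) (n + 1)| * (n + 1 + 1 : ℝ) ^ α
      = ((1 - α * t) * (1 + t) ^ α) * (|ces (-α) n| * (n + 1 : ℝ) ^ α) := by
        rw [ces_succ, abs_mul, h_ratio, abs_of_nonneg h_ratio_nonneg, h_base,
          Real.mul_rpow (by positivity) hn_pos.le]
        ring
    _ ≤ 1 * (|ces (-α) n| * (n + 1 : ℝ) ^ α) := by
        gcongr
        exact one_sub_mul_one_add_rpow_le_one hα (by positivity)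
    _ = |ces (-α) n| * (n + 1 : ℝ) ^ α := one_mul _

lemma exists_abs_ces_neg_le_rpow {α : ℝ} (hα : 0 ≤ α) :
    ∃ C : ℝ, 0 ≤ C ∧ ∀ n : ℕ, |ces (-α) n| ≤ C * (n + 1 : ℝ) ^ (-α) := by
  obtain ⟨N, hN⟩ := exists_nat_ge α
  have h_bdd : BddAbove (Set.range fun n : ℕ ↦ |ces (-α) n| * (n + 1 : ℝ) ^ α) := by
    refine Filter.IsBoundedUnder.bddAbove_range
      (Filter.isBoundedUnder_of_eventually_le (a := |ces (-α) N| * (N + 1 : ℝ) ^ α) ?_)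
    filter_upwards [Filter.eventually_ge_atTop N] with n hn
    induction n, hn using Nat.le_induction with
    | base => exact le_rfl
    | succ n hn ih =>
      have hn' : (N : ℝ) ≤ n := by exact_mod_cast hn
      refine le_trans ?_ ih
      rw [Nat.cast_succ]
      exact abs_ces_neg_succ_mul_rpow_le hα (by linarith)
  obtain ⟨C, hC⟩ := h_bdd
  rw [mem_upperBounds, Set.forall_mem_range] at hC
  refine ⟨C, le_trans (by positivity) (hC 0), fun n ↦ ?_⟩
  rw [Real.rpow_neg (by positivity), ← div_eq_mul_inv, le_div_iff₀ (by positivity)]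
  exact hC n

lemma one_add_log_le_rpow {ε x : ℝ} (hε : 0 < ε) (hx : 1 ≤ x) :
    1 + Real.log x ≤ (1 + 1 / ε) * x ^ ε :=
  calc 1 + Real.log x ≤ x ^ ε + x ^ ε / ε :=
        add_le_add (Real.one_le_rpow hx hε.le) (Real.log_le_rpow_div (by positivity) hε)
    _ = (1 + 1 / ε) * x ^ ε := by ring

lemma exists_abs_ces_neg_mul_log_sq_le {α : ℝ} (hα : 0 < α) :
    ∃ C : ℝ, 0 ≤ C ∧ ∀ n : ℕ, |ces (-α) n| * (1 + Real.log (n + 1)) ^ 2 ≤ C := by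
  obtain ⟨C, hC, h_ces⟩ := exists_abs_ces_neg_le_rpow hα.le
  refine ⟨C * (1 + 1 / (α / 2)) ^ 2, by positivity, fun n ↦ ?_⟩
  have hn_one : (1 : ℝ) ≤ n + 1 := by simp
  have hn_pos : (0 : ℝ) < n + 1 := by positivity
  have h_log : 0 ≤ Real.log (n + 1) := Real.log_nonneg hn_one
  calc |ces (-α) n| * (1 + Real.log (n + 1)) ^ 2
      ≤ C * (n + 1 : ℝ) ^ (-α) * ((1 + 1 / (α / 2)) * (n + 1 : ℝ) ^ (α / 2)) ^ 2 := by
        gcongr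
        exacts [h_ces n, one_add_log_le_rpow (half_pos hα) hn_one]
    _ = C * (1 + 1 / (α / 2)) ^ 2 * (n + 1 : ℝ) ^ (-α + (α / 2 + α / 2)) := by
        rw [Real.rpow_add hn_pos, Real.rpow_add hn_pos]
        ring
    _ = C * (1 + 1 / (α / 2)) ^ 2 := by
        rw [add_halves, neg_add_cancel, Real.rpow_zero, mul_one]

lemma summable_abs_ces_neg_sub_one_mul_log {α : ℝ} (hα : 0 < α) :
    Summable fun k : ℕ ↦ |ces (-α - 1) k| * (1 + Real.log (k + 1)) := by
  obtain ⟨C, hC, h_ces⟩ := exists_abs_ces_neg_le_rpow (add_pos hα one_pos).le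
  have h_rpow : Summable fun k : ℕ ↦ (k + 1 : ℝ) ^ (-(α + 1) + α / 2) := by
    exact_mod_cast (summable_nat_add_iff 1).2
      (Real.summable_nat_rpow.2 (by linarith : -(α + 1) + α / 2 < -1))
  refine (h_rpow.mul_left (C * (1 + 1 / (α / 2)))).of_nonneg_of_le (fun k ↦ ?_) fun k ↦ ?_
  · have h_log : 0 ≤ Real.log (k + 1) := Real.log_nonneg (by simp)
    positivity
  · calc |ces (-α - 1) k| * (1 + Real.log (k + 1))
        ≤ C * (k + 1 : ℝ) ^ (-(α + 1)) * ((1 + 1 / (α / 2)) * (k + 1 : ℝ) ^ (α / 2)) := by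
          rw [← neg_add']
          have h_log : 0 ≤ Real.log (k + 1) := Real.log_nonneg (by simp)
          gcongr
          exacts [h_ces k, one_add_log_le_rpow (half_pos hα) (by simp)]
      _ = C * (1 + 1 / (α / 2)) * (k + 1 : ℝ) ^ (-(α + 1) + α / 2) := by
          rw [Real.rpow_add (by positivity)]
          ring

lemma one_add_log_succ_le {n : ℕ} (hn : 2 ≤ n) : 1 + Real.log (n + 1) ≤ 4 * Real.log n := by
  have hn' : (2 : ℝ) ≤ n := by exact_mod_cast hn
  have h_one : 1 ≤ 2 * Real.log n := by
    linarith [Real.log_le_log two_pos hn', Real.log_two_gt_d9]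
  have h_sq : Real.log (n + 1) ≤ 2 * Real.log n := by
    rw [← Nat.cast_two, ← Real.log_pow]
    exact Real.log_le_log (by positivity) (by nlinarith)
  linarith

lemma exists_ces_log_bound {α : ℝ} (hα : 0 < α) :
    ∃ C : ℝ, 0 < C ∧ ∀ n : ℕ, 2 ≤ n →
      |∑ k ∈ range (n + 1), ces (-α - 1) k| * (1 + Real.log (n + 1)) ^ 2 +
        2 * (1 + Real.log (n + 1)) *
          ∑ k ∈ range (n + 1), |ces (-α - 1) k| * (1 + Real.log (k + 1)) ≤ C * Real.log n := by
  obtain ⟨C, hC, h_main⟩ := exists_abs_ces_neg_mul_log_sq_le hα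
  have h_summable := summable_abs_ces_neg_sub_one_mul_log hα
  have h_nonneg (k : ℕ) : 0 ≤ |ces (-α - 1) k| * (1 + Real.log (k + 1)) := by
    have h_log : 0 ≤ Real.log (k + 1) := Real.log_nonneg (by simp)
    positivity
  set S := ∑' k : ℕ, |ces (-α - 1) k| * (1 + Real.log (k + 1))
  have hS : 0 ≤ S := tsum_nonneg h_nonneg
  refine ⟨4 * (C + 2 * S) + 1, by positivity, fun n hn ↦ ?_⟩
  have h_log : 0 ≤ Real.log (n + 1) := Real.log_nonneg (by simp)
  calc _ ≤ C + 2 * (1 + Real.log (n + 1)) * S := by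
        rw [sum_ces_sub_one]
        gcongr
        exacts [h_main n, h_summable.sum_le_tsum _ fun k _ ↦ h_nonneg k]
    _ ≤ (C + 2 * S) * (1 + Real.log (n + 1)) := by nlinarith
    _ ≤ (C + 2 * S) * (4 * Real.log n) := by
        gcongr
        exact one_add_log_succ_le hn
    _ ≤ (4 * (C + 2 * S) + 1) * Real.log n := by linarith [Real.log_natCast_nonneg n]

end CesaroNumbers

section Digits

variable {m : ℕ → ℕ}

lemma Mgen_eq_prod (n : ℕ) : Mgen m n = ∏ k ∈ range n, m k := by
  induction n with
  | zero => rfl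
  | succ n ih => rw [Mgen, ih, prod_range_succ, mul_comm]

lemma Mgen_pos [∀ k, NeZero (m k)] (n : ℕ) : 0 < Mgen m n := by
  rw [Mgen_eq_prod]
  exact prod_pos fun k _ ↦ NeZero.pos (m k)

lemma Mgen_dvd_Mgen {i j : ℕ} (h : i ≤ j) : Mgen m i ∣ Mgen m j := by
  simp only [Mgen_eq_prod]
  exact prod_dvd_prod_of_subset _ _ _ (range_mono h)

lemma Mgen_monotone [∀ k, NeZero (m k)] : Monotone (Mgen m) :=
  fun _ j h ↦ Nat.le_of_dvd (Mgen_pos j) (Mgen_dvd_Mgen h)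

lemma two_pow_le_Mgen [∀ k, (m k).AtLeastTwo] (n : ℕ) : 2 ^ n ≤ Mgen m n := by
  rw [Mgen_eq_prod]
  simpa using pow_card_le_prod (range n) m 2 fun k _ ↦ Nat.AtLeastTwo.prop

lemma lt_Mgen_self [∀ k, (m k).AtLeastTwo] (n : ℕ) : n < Mgen m n :=
  Nat.lt_two_pow_self.trans_le (two_pow_le_Mgen n)

lemma vdigit_eq_mod_div (n l : ℕ) : vdigit m n l = n % Mgen m (l + 1) / Mgen m l :=
  (Nat.mod_mul_left_div_self n (Mgen m l) (m l)).symm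

lemma vdigit_eq_zero_of_lt {n l : ℕ} (h : n < Mgen m l) : vdigit m n l = 0 := by
  rw [vdigit, Nat.div_eq_of_lt h, Nat.zero_mod]

lemma vdigit_mul_Mgen_self [∀ k, NeZero (m k)] {s j : ℕ} (hs : s < m j) :
    vdigit m (s * Mgen m j) j = s := by
  rw [vdigit, Nat.mul_div_cancel _ (Mgen_pos j), Nat.mod_eq_of_lt hs]

lemma vdigit_mul_Mgen_add_of_lt {l j : ℕ} (h : l < j) (q i : ℕ) :
    vdigit m (q * Mgen m j + i) l = vdigit m i l := by
  obtain ⟨t, ht⟩ := Mgen_dvd_Mgen (m := m) (Nat.succ_le_of_lt h)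
  rw [vdigit_eq_mod_div, vdigit_eq_mod_div, ht, mul_left_comm, Nat.mul_add_mod]

lemma vdigit_mul_Mgen_of_lt {l j : ℕ} (h : l < j) (q : ℕ) : vdigit m (q * Mgen m j) l = 0 := by
  simpa [vdigit] using vdigit_mul_Mgen_add_of_lt (m := m) h q 0

lemma vdigit_mul_Mgen_add_of_le {i j l : ℕ} (hi : i < Mgen m j) (h : j ≤ l) (q : ℕ) :
    vdigit m (q * Mgen m j + i) l = vdigit m (q * Mgen m j) l := by
  obtain ⟨t, ht⟩ := Mgen_dvd_Mgen (m := m) h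
  have hM : 0 < Mgen m j := Nat.zero_lt_of_lt hi
  have hq : (q * Mgen m j + i) / Mgen m j = q := by
    rw [add_comm, Nat.add_mul_div_right _ _ hM, Nat.div_eq_of_lt hi, zero_add]
  rw [vdigit, vdigit, ht, ← Nat.div_div_eq_div_mul, ← Nat.div_div_eq_div_mul, hq,
    Nat.mul_div_cancel _ hM]

lemma vdigit_mul_Mgen_add [∀ k, NeZero (m k)] {i j : ℕ} (hi : i < Mgen m j) (q l : ℕ) :
    vdigit m (q * Mgen m j + i) l = vdigit m (q * Mgen m j) l + vdigit m i l := by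
  rcases lt_or_ge l j with h | h
  · rw [vdigit_mul_Mgen_add_of_lt h, vdigit_mul_Mgen_of_lt h, zero_add]
  · rw [vdigit_mul_Mgen_add_of_le hi h, vdigit_eq_zero_of_lt (hi.trans_le (Mgen_monotone h)),
      add_zero]

end Digits

section Characters

variable {m : ℕ → ℕ}

/-- The generalized Rademacher function `r_k(x) = exp(2πi x_k / m_k)`, the factor of the Vilenkin
functions belonging to the coordinate `k`. -/
def rademacher (m : ℕ → ℕ) (k : ℕ) (x : Vil m) : ℂ :=
  Complex.exp (2 * Real.pi * Complex.I * ((x k).val : ℂ) / (m k : ℂ))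

lemma rademacher_eq_stdAddChar (k : ℕ) [NeZero (m k)] (x : Vil m) :
    rademacher m k x = ZMod.stdAddChar (x k) :=
  (ZMod.toCircle_apply (x k)).symm

lemma norm_rademacher (k : ℕ) [NeZero (m k)] (x : Vil m) : ‖rademacher m k x‖ = 1 := by
  rw [rademacher_eq_stdAddChar, AddChar.norm_apply]

lemma measurable_rademacher (k : ℕ) : Measurable (rademacher m k) :=
  (measurable_from_top (f := fun y : ZMod (m k) ↦
    Complex.exp (2 * Real.pi * Complex.I * (y.val : ℂ) / (m k : ℂ)))).comp (measurable_pi_apply k)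

lemma sum_rademacher_pow_eq_zero {k : ℕ} [NeZero (m k)] {x : Vil m} (hx : x k ≠ 0) :
    ∑ s ∈ range (m k), rademacher m k x ^ s = 0 := by
  have h_ne_one : rademacher m k x ≠ 1 := by
    rw [rademacher_eq_stdAddChar, ← AddChar.map_zero_eq_one (ZMod.stdAddChar (N := m k))]
    exact ZMod.injective_stdAddChar.ne hx
  have h_pow : rademacher m k x ^ m k = 1 := by
    rw [rademacher_eq_stdAddChar, ← AddChar.map_nsmul_eq_pow, nsmul_eq_mul, CharP.cast_eq_zero,
      zero_mul, AddChar.map_zero_eq_one]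
  rw [geom_sum_eq h_ne_one, h_pow, sub_self, zero_div]

lemma measurable_vpsi (n : ℕ) : Measurable (vpsi m n) :=
  Finset.measurable_fun_prod _ fun k _ ↦ (measurable_rademacher k).pow_const _

lemma norm_vpsi [∀ k, NeZero (m k)] (n : ℕ) (x : Vil m) : ‖vpsi m n x‖ = 1 := by
  rw [vpsi, norm_prod]
  refine prod_eq_one fun k _ ↦ ?_
  rw [norm_pow, ← rademacher, norm_rademacher, one_pow]

variable [∀ k, (m k).AtLeastTwo]

lemma vpsi_eq_prod_rademacher {n N : ℕ} (h : n < N) (x : Vil m) :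
    vpsi m n x = ∏ k ∈ range N, rademacher m k x ^ vdigit m n k := by
  refine prod_subset (range_mono h) fun k _ hk ↦ ?_
  have hnk : n < k := by simpa using hk
  rw [vdigit_eq_zero_of_lt (hnk.trans (lt_Mgen_self k)), pow_zero]

lemma vpsi_mul_Mgen_add {i j : ℕ} (hi : i < Mgen m j) (q : ℕ) (x : Vil m) :
    vpsi m (q * Mgen m j + i) x = vpsi m (q * Mgen m j) x * vpsi m i x := by
  have hN : q * Mgen m j + i < q * Mgen m j + i + 1 := Nat.lt_succ_self _
  rw [vpsi_eq_prod_rademacher hN, vpsi_eq_prod_rademacher ((Nat.le_add_right _ _).trans_lt hN),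
    vpsi_eq_prod_rademacher ((Nat.le_add_left _ _).trans_lt hN), ← prod_mul_distrib]
  simp only [vdigit_mul_Mgen_add hi, pow_add]

lemma vpsi_mul_Mgen {s j : ℕ} (hs : s < m j) (x : Vil m) :
    vpsi m (s * Mgen m j) x = rademacher m j x ^ s := by
  rw [vpsi_eq_prod_rademacher (N := s * Mgen m j + 1 + j) (by omega),
    prod_eq_single_of_mem j (by simp), vdigit_mul_Mgen_self hs]
  intro l _ hl
  rcases lt_or_gt_of_ne hl with h | h
  · rw [vdigit_mul_Mgen_of_lt h, pow_zero]
  · have h_lt : s * Mgen m j < Mgen m (j + 1) := Nat.mul_lt_mul_of_pos_right hs (Mgen_pos j)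
    rw [vdigit_eq_zero_of_lt (h_lt.trans_le (Mgen_monotone h)), pow_zero]

end Characters

section DirichletKernel

variable {m : ℕ → ℕ}

lemma vD_zero : vD m 0 = 0 := by
  ext
  simp [vD]

lemma measurable_vD (n : ℕ) : Measurable (vD m n) :=
  Finset.measurable_fun_sum _ fun k _ ↦ measurable_vpsi k

variable [∀ k, (m k).AtLeastTwo]

lemma vD_mul_Mgen_add {i j : ℕ} (hi : i ≤ Mgen m j) (q : ℕ) :
    vD m (q * Mgen m j + i) = vD m (q * Mgen m j) + vpsi m (q * Mgen m j) * vD m i := by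
  ext x
  simp only [Pi.add_apply, Pi.mul_apply, vD, sum_range_add, mul_sum]
  congr 1
  exact sum_congr rfl fun k hk ↦ vpsi_mul_Mgen_add ((mem_range.1 hk).trans_le hi) q x

lemma vD_mul_Mgen {s j : ℕ} (hs : s ≤ m j) (x : Vil m) :
    vD m (s * Mgen m j) x = (∑ t ∈ range s, rademacher m j x ^ t) * vD m (Mgen m j) x := by
  induction s with
  | zero => simp [vD]
  | succ s ih =>
    rw [Nat.succ_mul, vD_mul_Mgen_add le_rfl, Pi.add_apply, Pi.mul_apply, ih (by omega),
      vpsi_mul_Mgen (by omega), sum_range_succ, add_mul]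

lemma vD_Mgen_eq_indicator (j : ℕ) :
    vD m (Mgen m j) = (In m j).indicator fun _ ↦ (Mgen m j : ℂ) := by
  ext x
  induction j with
  | zero => simp [Mgen, vD, vpsi, vdigit, In]
  | succ j ih =>
    have h_mem : x ∈ In m (j + 1) ↔ x ∈ In m j ∧ x j = 0 := Nat.forall_lt_succ_right
    rw [Mgen, vD_mul_Mgen le_rfl, ih]
    by_cases hx : x j = 0
    · have h_one : rademacher m j x = 1 := by simp [rademacher, hx]
      by_cases hj : x ∈ In m j <;> simp [h_mem, hx, hj, h_one]
    · simp [h_mem, hx, sum_rademacher_pow_eq_zero hx]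

end DirichletKernel

section Measure

variable {m : ℕ → ℕ}

/-- The projection of the Vilenkin group onto its first `n` coordinates. Its kernel is `In m n`. -/
def truncation (m : ℕ → ℕ) (n : ℕ) : Vil m →+ ∀ k : Fin n, ZMod (m k) :=
  AddMonoidHom.pi fun k ↦ Pi.evalAddMonoidHom (fun k ↦ ZMod (m k)) k

lemma truncation_surjective (n : ℕ) : Function.Surjective (truncation m n) := by
  intro y
  refine ⟨fun k ↦ if h : k < n then y ⟨k, h⟩ else 0, funext fun k ↦ ?_⟩
  simp [truncation]

lemma coe_ker_truncation (n : ℕ) : ((truncation m n).ker : Set (Vil m)) = In m n := by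
  ext x
  simp [truncation, In, funext_iff, Fin.forall_iff, AddMonoidHom.mem_ker]

lemma index_ker_truncation (n : ℕ) : (truncation m n).ker.index = Mgen m n := by
  rw [AddSubgroup.index_ker, AddMonoidHom.range_eq_top.2 (truncation_surjective n),
    AddSubgroup.card_top, Nat.card_pi, Mgen_eq_prod, ← Fin.prod_univ_eq_prod_range]
  simp only [Nat.card_zmod]

lemma measurableSet_In (n : ℕ) : MeasurableSet (In m n) := by
  simp only [In, Set.ofPred_forall]
  exact .iInter fun k ↦ .iInter fun _ ↦ measurable_pi_apply k (.singleton 0)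

lemma Mgen_mul_measure_In [∀ k, NeZero (m k)] (μ : Measure (Vil m)) [μ.IsAddLeftInvariant]
    (n : ℕ) : Mgen m n * μ (In m n) = μ Set.univ := by
  have : (truncation m n).ker.FiniteIndex :=
    ⟨(index_ker_truncation (m := m) n).trans_ne (Mgen_pos n).ne'⟩
  rw [← index_ker_truncation, ← coe_ker_truncation]
  exact AddSubgroup.index_mul_measure _ (coe_ker_truncation (m := m) n ▸ measurableSet_In n) μ

end Measure

section DirichletNorms

variable {m : ℕ → ℕ} {μ : Measure (Vil m)}

lemma eLpNorm_vD_sub_le (a b c : ℕ) :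
    eLpNorm (vD m c - vD m a) 1 μ ≤
      eLpNorm (vD m b - vD m a) 1 μ + eLpNorm (vD m c - vD m b) 1 μ := by
  rw [← sub_add_sub_cancel' (vD m b)]
  exact eLpNorm_add_le ((measurable_vD b).sub (measurable_vD a)).aestronglyMeasurable
    ((measurable_vD c).sub (measurable_vD b)).aestronglyMeasurable le_rfl

variable [∀ k, (m k).AtLeastTwo]

lemma eLpNorm_vD_mul_Mgen_add_sub {i j : ℕ} (hi : i ≤ Mgen m j) (q : ℕ) (p : ℝ≥0∞) :
    eLpNorm (vD m (q * Mgen m j + i) - vD m (q * Mgen m j)) p μ = eLpNorm (vD m i) p μ := by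
  refine eLpNorm_congr_norm_ae (.of_forall fun x ↦ ?_)
  rw [vD_mul_Mgen_add hi, add_sub_cancel_left, Pi.mul_apply, norm_mul, norm_vpsi, one_mul]

lemma eLpNorm_vD_mul_Mgen_add_le {i j : ℕ} (hi : i ≤ Mgen m j) (q : ℕ) :
    eLpNorm (vD m (q * Mgen m j + i)) 1 μ ≤
      eLpNorm (vD m (q * Mgen m j)) 1 μ + eLpNorm (vD m i) 1 μ := by
  simpa only [vD_zero, sub_zero, eLpNorm_vD_mul_Mgen_add_sub hi] using
    eLpNorm_vD_sub_le (μ := μ) 0 (q * Mgen m j) (q * Mgen m j + i)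

variable [IsProbabilityMeasure μ] [μ.IsAddLeftInvariant]

lemma eLpNorm_vD_Mgen (j : ℕ) : eLpNorm (vD m (Mgen m j)) 1 μ = 1 := by
  calc eLpNorm (vD m (Mgen m j)) 1 μ = ‖(Mgen m j : ℂ)‖ₑ * μ (In m j) := by
        rw [vD_Mgen_eq_indicator,
          eLpNorm_indicator_const (measurableSet_In j) one_ne_zero ENNReal.one_ne_top]
        simp only [ENNReal.toReal_one, div_one, ENNReal.rpow_one]
    _ = Mgen m j * μ (In m j) := by
        rw [← ofReal_norm, Complex.norm_natCast, ENNReal.ofReal_natCast]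
    _ = 1 := by rw [Mgen_mul_measure_In, measure_univ]

lemma eLpNorm_vD_mul_Mgen_le (q j : ℕ) : eLpNorm (vD m (q * Mgen m j)) 1 μ ≤ q := by
  induction q with
  | zero => simp [vD_zero]
  | succ q ih =>
    rw [Nat.succ_mul, Nat.cast_succ]
    calc eLpNorm (vD m (q * Mgen m j + Mgen m j)) 1 μ
        ≤ eLpNorm (vD m (q * Mgen m j)) 1 μ + eLpNorm (vD m (Mgen m j)) 1 μ :=
          eLpNorm_vD_mul_Mgen_add_le le_rfl q
      _ ≤ q + 1 := add_le_add ih (eLpNorm_vD_Mgen j).le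

lemma eLpNorm_vD_le_of_le_Mgen {i j : ℕ} (hi : i ≤ Mgen m j) :
    eLpNorm (vD m i) 1 μ ≤ 1 + ∑ l ∈ range j, (m l : ℝ≥0∞) := by
  induction j generalizing i with
  | zero =>
    calc eLpNorm (vD m i) 1 μ ≤ i := by simpa [Mgen] using eLpNorm_vD_mul_Mgen_le (μ := μ) i 0
      _ ≤ 1 + ∑ l ∈ range 0, (m l : ℝ≥0∞) := by simpa [Mgen] using hi
  | succ j ih =>
    have hr : i % Mgen m j ≤ Mgen m j := (Nat.mod_lt i (Mgen_pos j)).le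
    have hq : i / Mgen m j ≤ m j := Nat.div_le_of_le_mul (by rwa [mul_comm])
    calc eLpNorm (vD m i) 1 μ
        = eLpNorm (vD m (i / Mgen m j * Mgen m j + i % Mgen m j)) 1 μ := by
          rw [Nat.div_add_mod']
      _ ≤ eLpNorm (vD m (i / Mgen m j * Mgen m j)) 1 μ + eLpNorm (vD m (i % Mgen m j)) 1 μ :=
          eLpNorm_vD_mul_Mgen_add_le hr _
      _ ≤ m j + (1 + ∑ l ∈ range j, (m l : ℝ≥0∞)) :=
          add_le_add ((eLpNorm_vD_mul_Mgen_le _ j).trans (by exact_mod_cast hq)) (ih hr)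
      _ = 1 + ∑ l ∈ range (j + 1), (m l : ℝ≥0∞) := by rw [sum_range_succ]; ring

lemma eLpNorm_vD_mul_Mgen_add_sub_le {t j : ℕ} (ht : t ≤ 2 * Mgen m j) (q : ℕ) :
    eLpNorm (vD m (q * Mgen m j + t) - vD m (q * Mgen m j)) 1 μ ≤
      2 + ∑ l ∈ range j, (m l : ℝ≥0∞) := by
  have h_two : 1 + (1 + ∑ l ∈ range j, (m l : ℝ≥0∞)) = 2 + ∑ l ∈ range j, (m l : ℝ≥0∞) := by
    rw [← add_assoc, one_add_one_eq_two]
  rw [← h_two]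
  rcases le_total t (Mgen m j) with h | h
  · rw [eLpNorm_vD_mul_Mgen_add_sub h]
    exact (eLpNorm_vD_le_of_le_Mgen h).trans le_add_self
  · obtain ⟨i, rfl⟩ := Nat.exists_eq_add_of_le h
    have hi : i ≤ Mgen m j := by omega
    refine (eLpNorm_vD_sub_le _ (q * Mgen m j + Mgen m j) _).trans (add_le_add ?_ ?_)
    · rw [eLpNorm_vD_mul_Mgen_add_sub le_rfl, eLpNorm_vD_Mgen]
    · rw [← add_assoc, ← Nat.succ_mul, eLpNorm_vD_mul_Mgen_add_sub hi]
      exact eLpNorm_vD_le_of_le_Mgen hi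

lemma eLpNorm_vD_add_sub_le_of_le_Mgen {k j : ℕ} (hk : k ≤ Mgen m j) (a : ℕ) :
    eLpNorm (vD m (a + k) - vD m a) 1 μ ≤ 2 * (2 + ∑ l ∈ range j, (m l : ℝ≥0∞)) := by
  have hr : a % Mgen m j < Mgen m j := Nat.mod_lt a (Mgen_pos j)
  have ha : a = a / Mgen m j * Mgen m j + a % Mgen m j := (Nat.div_add_mod' a _).symm
  -- Both `a` and `a + k` lie in `[q M_j, (q + 2) M_j]`, so compare them with `q M_j`.
  set q := a / Mgen m j
  set r := a % Mgen m j
  rw [ha, add_assoc, two_mul]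
  refine (eLpNorm_vD_sub_le _ (q * Mgen m j) _).trans (add_le_add ?_ ?_)
  · rw [eLpNorm_sub_comm]
    exact eLpNorm_vD_mul_Mgen_add_sub_le (by omega) q
  · exact eLpNorm_vD_mul_Mgen_add_sub_le (by omega) q

lemma eLpNorm_vD_add_sub_le_log {Λ : ℕ} (hΛ : ∀ k, m k ≤ Λ) (a k : ℕ) :
    eLpNorm (vD m (a + k) - vD m a) 1 μ ≤
      ENNReal.ofReal (4 * (Λ + 1) * (1 + Real.log (k + 1))) := by
  set j := Nat.log 2 (k + 1) + 1
  have hk : k ≤ Mgen m j :=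
    (Nat.le_succ k).trans ((Nat.lt_pow_succ_log_self one_lt_two _).le.trans (two_pow_le_Mgen j))
  have hj : (j : ℝ) ≤ 2 * (1 + Real.log (k + 1)) := by
    have h_logb : (Nat.log 2 (k + 1) : ℝ) ≤ Real.log (k + 1) / Real.log 2 := by
      simpa [Real.logb] using Real.natLog_le_logb (k + 1) 2
    have h_div : Real.log (k + 1) / Real.log 2 ≤ 2 * Real.log (k + 1) := by
      rw [div_le_iff₀ (Real.log_pos one_lt_two)]
      nlinarith [Real.log_two_gt_d9, Real.log_nonneg (by simp : (1 : ℝ) ≤ k + 1)]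
    simp only [j]
    push_cast
    linarith
  calc eLpNorm (vD m (a + k) - vD m a) 1 μ
      ≤ 2 * (2 + ∑ l ∈ range j, (m l : ℝ≥0∞)) := eLpNorm_vD_add_sub_le_of_le_Mgen hk a
    _ ≤ 2 * (2 + ∑ _ ∈ range j, (Λ : ℝ≥0∞)) := by gcongr; exact hΛ _
    _ = ENNReal.ofReal (2 * (2 + j * Λ)) := by
      rw [sum_const, card_range, nsmul_eq_mul]
      exact_mod_cast (ENNReal.ofReal_natCast (2 * (2 + j * Λ))).symm
    _ ≤ ENNReal.ofReal (4 * (Λ + 1) * (1 + Real.log (k + 1))) := by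
      refine ENNReal.ofReal_le_ofReal ?_
      nlinarith [Real.log_nonneg (by simp : (1 : ℝ) ≤ k + 1)]

end DirichletNorms

section CesaroKernel

lemma sum_Icc_ces_mul_vD_mul_vD (m : ℕ → ℕ) (β : ℝ) (n : ℕ) (z : Vil m × Vil m) :
    ∑ i ∈ Icc 1 n, (ces β (n - i) : ℂ) * vD m i z.1 * vD m i z.2 =
      (∑ i ∈ range (n + 1), ces β (n - i) • tensor (vD m i) (vD m i)) z := by
  rw [range_eq_Ico, sum_eq_sum_Ico_succ_bot n.add_one_pos, zero_add, Ico_add_one_right_eq_Icc]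
  simp only [Pi.add_apply, Finset.sum_apply, Pi.smul_apply, tensor, vD_zero, Pi.zero_apply,
    mul_zero, smul_zero, zero_add, Complex.real_smul, mul_assoc]

variable {m : ℕ → ℕ} [∀ k, (m k).AtLeastTwo] {Λ : ℕ} {μ : Measure (Vil m)}
  [IsProbabilityMeasure μ] [μ.IsAddLeftInvariant]

lemma eLpNorm_one_sum_smul_tensor_vD_le (hΛ : ∀ k, m k ≤ Λ) (w : ℕ → ℝ) (n : ℕ) :
    eLpNorm (∑ i ∈ range (n + 1), w (n - i) • tensor (vD m i) (vD m i)) 1 (μ.prod μ) ≤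
      ENNReal.ofReal ((4 * (Λ + 1)) ^ 2 *
        (|∑ k ∈ range (n + 1), w k| * (1 + Real.log (n + 1)) ^ 2 +
          2 * (1 + Real.log (n + 1)) *
            ∑ k ∈ range (n + 1), |w k| * (1 + Real.log (k + 1)))) := by
  have h_mono : Monotone fun k : ℕ ↦ 4 * (Λ + 1) * (1 + Real.log (k + 1)) := by
    intro i j hij
    dsimp only
    gcongr
  have h_nonneg (k : ℕ) : 0 ≤ 4 * (Λ + 1) * (1 + Real.log (k + 1)) := by
    have h_log : 0 ≤ Real.log (k + 1) := Real.log_nonneg (by simp)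
    positivity
  refine (eLpNorm_one_sum_smul_tensor_self_le_ofReal
    (fun i ↦ (measurable_vD i).aestronglyMeasurable) vD_zero h_mono h_nonneg
    (eLpNorm_vD_add_sub_le_log hΛ) w n).trans_eq ?_
  simp only [Real.norm_eq_abs, mul_left_comm _ (4 * (Λ + 1 : ℝ)), ← mul_sum]
  congr 1
  ring

end CesaroKernel

theorem negative_cesaro_kernel_log_bound_general (m : ℕ → ℕ) (hm : ∀ k, 2 ≤ m k)
    (Λ : ℕ) (hΛ : ∀ k, m k ≤ Λ)
    (μ : Measure (Vil m)) [IsProbabilityMeasure μ] [μ.IsAddLeftInvariant]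
    (α : ℝ) (hα : 0 < α) :
    ∃ c : ℝ, 0 < c ∧ ∀ n : ℕ, 2 ≤ n →
      ∫⁻ z : Vil m × Vil m,
          (‖∑ i ∈ Finset.Icc 1 n,
              ((ces (-α - 1) (n - i) : ℝ) : ℂ) * vD m i z.1 * vD m i z.2‖₊ : ℝ≥0∞)
          ∂(μ.prod μ) ≤ ENNReal.ofReal (c * Real.log n) := by
  have (k : ℕ) : (m k).AtLeastTwo := ⟨hm k⟩
  obtain ⟨C, hC, h_log⟩ := exists_ces_log_bound hα
  refine ⟨(4 * (Λ + 1)) ^ 2 * C, by positivity, fun n hn ↦ ?_⟩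
  simp only [sum_Icc_ces_mul_vD_mul_vD, ← enorm_eq_nnnorm]
  rw [← eLpNorm_one_eq_lintegral_enorm, mul_assoc]
  refine (eLpNorm_one_sum_smul_tensor_vD_le hΛ _ n).trans (ENNReal.ofReal_le_ofReal ?_)
  gcongr
  exact h_log n hn

/-- logarithmic `L¹` bound for the negative-order Cesàro kernel. -/
theorem negative_cesaro_kernel_log_bound (m : ℕ → ℕ) (hm : ∀ k, 2 ≤ m k)
    (Λ : ℕ) (hΛ : ∀ k, m k ≤ Λ)
    (μ : Measure (Vil m)) [IsProbabilityMeasure μ] [μ.IsAddLeftInvariant]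
    (α : ℝ) (hα : α ∈ Set.Ioo (0 : ℝ) 1) :
    ∃ c : ℝ, 0 < c ∧ ∀ n : ℕ, 2 ≤ n →
      ∫⁻ z : Vil m × Vil m,
          (‖∑ i ∈ Finset.Icc 1 n,
              ((ces (-α - 1) (n - i) : ℝ) : ℂ) * vD m i z.1 * vD m i z.2‖₊ : ℝ≥0∞)
          ∂(μ.prod μ) ≤ ENNReal.ofReal (c * Real.log n) :=
  negative_cesaro_kernel_log_bound_general m hm Λ hΛ μ α hα.1
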